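/- For every s ∈ ℝ: ∫_ℝ e^{isx} · (2x/(π(1+x²)²)) dx = i s e^{−|s|} and ∫_ℝ e^{isx} · ((x²−1)/(π(1+x²)²)) dx = −|s| e^{−|s|}. -/

import Mathlib

open MeasureTheory Real

/-!
The Laplace transform of `t ↦ t ^ n` at `z + ix` says that `n! / (z + ix) ^ (n + 1)` is the Fourier
transform of the kernel `t₊ ^ n * e ^ (-z t)`, so by Fourier inversion the transform of
`1 / (z ± ix) ^ (n + 1)` is this kernel, reflected in the second case. Since
`1 + x² = (1 + ix) (1 - ix)`, both Cauchy scores times the density are linear combinations of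
`1 / (1 + ix) ^ 2` and `1 / (1 - ix) ^ 2`, and the kernel `K t = t₊ * e ^ (-t)` satisfies
`K s + K (-s) = |s| * e ^ (-|s|)` and `K s - K (-s) = s * e ^ (-|s|)`.
-/

open Filter Set Topology
open scoped FourierTransform Nat

section FourierInversion

variable {E : Type*} [NormedAddCommGroup E] [NormedSpace ℂ E]

lemma fourier_eq_integral_cexp_neg_smul (f : ℝ → E) (w : ℝ) :
    𝓕 f w = ∫ t : ℝ, Complex.exp (-(Complex.I * (2 * π * w : ℝ) * t)) • f t := by
  rw [Real.fourier_real_eq_integral_exp_smul]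
  congr! 4
  push_cast
  ring

lemma integral_cexp_smul_integral_cexp_neg_smul [CompleteSpace E] {f : ℝ → E}
    (hf : Integrable f)
    (hF : Integrable fun x : ℝ ↦ ∫ t : ℝ, Complex.exp (-(Complex.I * x * t)) • f t)
    {s : ℝ} (hs : ContinuousAt f s) :
    ∫ x : ℝ, Complex.exp (Complex.I * s * x) • ∫ t : ℝ, Complex.exp (-(Complex.I * x * t)) • f t
      = (2 * π) • f s := by
  set F : ℝ → E := fun x ↦ ∫ t : ℝ, Complex.exp (-(Complex.I * x * t)) • f t
  have fourier_eq : 𝓕 f = fun w ↦ F (2 * π * w) := funext (fourier_eq_integral_cexp_neg_smul f)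
  have integrable_fourier : Integrable (𝓕 f) := by
    rw [fourier_eq]
    exact hF.comp_mul_left' two_pi_pos.ne'
  have inversion : f s
      = ∫ w : ℝ, Complex.exp (Complex.I * s * (2 * π * w : ℝ)) • F (2 * π * w) := by
    rw [← hf.fourierInv_fourier_eq integrable_fourier hs, Real.fourierInv_eq', fourier_eq]
    congr! 4
    simp only [RCLike.inner_apply, conj_trivial]
    push_cast
    ring
  rw [inversion,
    Measure.integral_comp_mul_left (fun x : ℝ ↦ Complex.exp (Complex.I * s * x) • F x) (2 * π),
    abs_of_pos (inv_pos.2 two_pi_pos), smul_inv_smul₀ two_pi_pos.ne']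

end FourierInversion

section Laplace

variable {z : ℂ}

lemma norm_pow_mul_cexp_neg_mul (n : ℕ) (z : ℂ) {t : ℝ} (ht : 0 ≤ t) :
    ‖(t : ℂ) ^ n * Complex.exp (-(z * t))‖ = t ^ (n : ℝ) * Real.exp (-z.re * t) := by
  rw [norm_mul, norm_pow, Complex.norm_of_nonneg ht, Complex.norm_exp, rpow_natCast]
  simp

lemma integrableOn_Ioi_pow_mul_cexp_neg_mul (n : ℕ) (hz : 0 < z.re) :
    IntegrableOn (fun t : ℝ ↦ (t : ℂ) ^ n * Complex.exp (-(z * t))) (Ioi 0) := by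
  have dominating : IntegrableOn (fun t : ℝ ↦ t ^ (n : ℝ) * Real.exp (-z.re * t)) (Ioi 0) := by
    simpa only [rpow_one] using
      integrableOn_rpow_mul_exp_neg_mul_rpow (neg_one_lt_zero.trans_le n.cast_nonneg) one_pos hz
  refine dominating.mono' (by fun_prop) ?_
  filter_upwards [ae_restrict_mem measurableSet_Ioi] with t ht
  exact (norm_pow_mul_cexp_neg_mul n z (mem_Ioi.1 ht).le).le

lemma tendsto_pow_mul_cexp_neg_mul_atTop_nhds_zero (n : ℕ) (hz : 0 < z.re) :
    Tendsto (fun t : ℝ ↦ (t : ℂ) ^ n * Complex.exp (-(z * t))) atTop (𝓝 0) := by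
  rw [tendsto_zero_iff_norm_tendsto_zero]
  refine (tendsto_rpow_mul_exp_neg_mul_atTop_nhds_zero n z.re hz).congr' ?_
  filter_upwards [eventually_ge_atTop 0] with t ht
  exact (norm_pow_mul_cexp_neg_mul n z ht).symm

lemma integral_Ioi_pow_succ_mul_cexp_neg_mul (n : ℕ) (hz : 0 < z.re) :
    z * ∫ t in Ioi (0 : ℝ), (t : ℂ) ^ (n + 1) * Complex.exp (-(z * t))
      = (n + 1) * ∫ t in Ioi (0 : ℝ), (t : ℂ) ^ n * Complex.exp (-(z * t)) := by
  have hasDerivAt_pow_mul_cexp (t : ℝ) :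
      HasDerivAt (fun t : ℝ ↦ (t : ℂ) ^ (n + 1) * Complex.exp (-(z * t)))
      ((n + 1) * ((t : ℂ) ^ n * Complex.exp (-(z * t)))
        - z * ((t : ℂ) ^ (n + 1) * Complex.exp (-(z * t)))) t := by
    have h : HasDerivAt (fun t : ℝ ↦ (t : ℂ)) 1 t := Complex.ofRealCLM.hasDerivAt
    refine ((h.pow (n + 1)).mul (h.const_mul z).neg.cexp).congr_deriv ?_
    simp only [Pi.pow_apply, Pi.neg_apply, Nat.add_sub_cancel, Nat.cast_add, Nat.cast_one]
    ring
  have integrable_n := (integrableOn_Ioi_pow_mul_cexp_neg_mul n hz).const_mul (n + 1 : ℂ)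
  have integrable_succ := (integrableOn_Ioi_pow_mul_cexp_neg_mul (n + 1) hz).const_mul z
  have integral_deriv_eq_zero := integral_Ioi_of_hasDerivAt_of_tendsto'
    (fun t _ ↦ hasDerivAt_pow_mul_cexp t) (integrable_n.sub integrable_succ)
    (tendsto_pow_mul_cexp_neg_mul_atTop_nhds_zero (n + 1) hz)
  rw [integral_sub integrable_n integrable_succ, integral_const_mul, integral_const_mul,
    Complex.ofReal_zero, zero_pow n.succ_ne_zero, zero_mul, sub_zero] at integral_deriv_eq_zero
  exact (sub_eq_zero.1 integral_deriv_eq_zero).symm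

lemma integral_Ioi_pow_mul_cexp_neg_mul (n : ℕ) (hz : 0 < z.re) :
    ∫ t in Ioi (0 : ℝ), (t : ℂ) ^ n * Complex.exp (-(z * t)) = n ! / z ^ (n + 1) := by
  have z_ne_zero : z ≠ 0 := Complex.ne_zero_of_re_pos hz
  induction n with
  | zero =>
    have h := integral_exp_mul_complex_Ioi (a := -z) (by simpa using hz) 0
    simpa [div_eq_mul_inv] using h
  | succ n ih =>
    apply mul_left_cancel₀ z_ne_zero
    rw [integral_Ioi_pow_succ_mul_cexp_neg_mul n hz, ih, Nat.factorial_succ]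
    push_cast
    field_simp
    ring

end Laplace

/-- The Gamma kernel `t₊ ^ n * e ^ (-z t)`: the unnormalised density of the Gamma distribution of
shape `n + 1`, with a complex rate `z`. It is meant for `n ≠ 0`, as `0 ^ 0 = 1` makes it nonzero on
the negative half-line for `n = 0`. -/
noncomputable def gammaKernel (n : ℕ) (z : ℂ) (t : ℝ) : ℂ :=
  ((max t 0 : ℝ) : ℂ) ^ n * Complex.exp (-(z * t))

section GammaKernel

variable {n : ℕ} {z : ℂ} {t : ℝ}

lemma gammaKernel_of_nonneg (n : ℕ) (z : ℂ) (ht : 0 ≤ t) :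
    gammaKernel n z t = (t : ℂ) ^ n * Complex.exp (-(z * t)) := by
  rw [gammaKernel, max_eq_left ht]

lemma gammaKernel_of_nonpos (hn : n ≠ 0) (z : ℂ) (ht : t ≤ 0) : gammaKernel n z t = 0 := by
  rw [gammaKernel, max_eq_right ht, Complex.ofReal_zero, zero_pow hn, zero_mul]

lemma continuous_gammaKernel (n : ℕ) (z : ℂ) : Continuous (gammaKernel n z) := by
  unfold gammaKernel
  fun_prop

lemma integrable_gammaKernel (hn : n ≠ 0) (hz : 0 < z.re) : Integrable (gammaKernel n z) := by
  have support_subset : Function.support (gammaKernel n z) ⊆ Ioi 0 := fun t ht ↦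
    not_le.1 fun h ↦ ht (gammaKernel_of_nonpos hn z h)
  rw [← integrableOn_iff_integrable_of_support_subset support_subset]
  exact (integrableOn_Ioi_pow_mul_cexp_neg_mul n hz).congr_fun
    (fun t ht ↦ (gammaKernel_of_nonneg n z (mem_Ioi.1 ht).le).symm) measurableSet_Ioi

lemma cexp_neg_mul_gammaKernel (n : ℕ) (z w : ℂ) (t : ℝ) :
    Complex.exp (-(w * t)) * gammaKernel n z t = gammaKernel n (z + w) t := by
  rw [gammaKernel, gammaKernel, mul_left_comm, ← Complex.exp_add]
  ring_nf

lemma integral_gammaKernel (hn : n ≠ 0) (hz : 0 < z.re) :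
    ∫ t : ℝ, gammaKernel n z t = n ! / z ^ (n + 1) := by
  rw [← integral_Ioi_pow_mul_cexp_neg_mul n hz,
    ← setIntegral_eq_integral_of_forall_compl_eq_zero (s := Ioi 0)
      fun t ht ↦ gammaKernel_of_nonpos hn z (not_lt.1 ht)]
  exact setIntegral_congr_fun measurableSet_Ioi
    fun t ht ↦ gammaKernel_of_nonneg n z (mem_Ioi.1 ht).le

lemma gammaKernel_add_gammaKernel_neg (hn : n ≠ 0) (z : ℂ) (t : ℝ) :
    gammaKernel n z t + gammaKernel n z (-t) = (|t| : ℝ) ^ n * Complex.exp (-(z * (|t| : ℝ))) := by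
  rcases le_total 0 t with ht | ht
  · rw [gammaKernel_of_nonneg n z ht, gammaKernel_of_nonpos hn z (neg_nonpos.2 ht), add_zero,
      abs_of_nonneg ht]
  · rw [gammaKernel_of_nonpos hn z ht, gammaKernel_of_nonneg n z (neg_nonneg.2 ht), zero_add,
      abs_of_nonpos ht]

lemma gammaKernel_one_sub_gammaKernel_one_neg (z : ℂ) (t : ℝ) :
    gammaKernel 1 z t - gammaKernel 1 z (-t) = t * Complex.exp (-(z * (|t| : ℝ))) := by
  rcases le_total 0 t with ht | ht
  · rw [gammaKernel_of_nonneg 1 z ht, gammaKernel_of_nonpos one_ne_zero z (neg_nonpos.2 ht),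
      sub_zero, pow_one, abs_of_nonneg ht]
  · rw [gammaKernel_of_nonpos one_ne_zero z ht, gammaKernel_of_nonneg 1 z (neg_nonneg.2 ht),
      zero_sub, pow_one, abs_of_nonpos ht, Complex.ofReal_neg, neg_mul, neg_neg]

end GammaKernel

section RationalFunctions

variable {n : ℕ} {z : ℂ}

lemma add_I_mul_ofReal_ne_zero (hz : 0 < z.re) (x : ℝ) : z + Complex.I * x ≠ 0 :=
  Complex.ne_zero_of_re_pos (by simpa using hz)

lemma continuous_inv_add_I_mul_pow (n : ℕ) (hz : 0 < z.re) :
    Continuous fun x : ℝ ↦ ((z + Complex.I * x) ^ n)⁻¹ :=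
  Continuous.inv₀ (by fun_prop) fun x ↦ pow_ne_zero n (add_I_mul_ofReal_ne_zero hz x)

lemma norm_inv_add_I_mul_sq (hz : 0 < z.re) (x : ℝ) :
    ‖((z + Complex.I * x) ^ 2)⁻¹‖ = (z.re ^ 2)⁻¹ * (1 + ((z.im + x) / z.re) ^ 2)⁻¹ := by
  rw [norm_inv, norm_pow, Complex.sq_norm, Complex.normSq_apply, ← mul_inv]
  congr 1
  simp only [Complex.add_re, Complex.add_im, Complex.mul_re, Complex.mul_im, Complex.I_re,
    Complex.I_im, Complex.ofReal_re, Complex.ofReal_im]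
  field_simp
  ring

lemma norm_inv_add_I_mul_pow_le (n : ℕ) (hz : 0 < z.re) (x : ℝ) :
    ‖((z + Complex.I * x) ^ n)⁻¹‖ ≤ (z.re ^ n)⁻¹ := by
  have re_le_norm : z.re ≤ ‖z + Complex.I * x‖ := by
    simpa using Complex.re_le_norm (z + Complex.I * x)
  rw [norm_inv, norm_pow]
  gcongr

lemma integrable_inv_add_I_mul_pow (hn : 2 ≤ n) (hz : 0 < z.re) :
    Integrable fun x : ℝ ↦ ((z + Complex.I * x) ^ n)⁻¹ := by
  have integrable_sq : Integrable fun x : ℝ ↦ ((z + Complex.I * x) ^ 2)⁻¹ := by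
    refine (((integrable_inv_one_add_sq.comp_div hz.ne').comp_add_left z.im).const_mul
      (z.re ^ 2)⁻¹).mono' (continuous_inv_add_I_mul_pow 2 hz).aestronglyMeasurable ?_
    exact .of_forall fun x ↦ (norm_inv_add_I_mul_sq hz x).le
  obtain ⟨m, rfl⟩ := Nat.exists_eq_add_of_le' hn
  simp_rw [pow_add _ m, mul_inv]
  exact integrable_sq.bdd_mul (continuous_inv_add_I_mul_pow m hz).aestronglyMeasurable
    (.of_forall (norm_inv_add_I_mul_pow_le m hz))

lemma integral_cexp_neg_smul_gammaKernel (hn : n ≠ 0) (hz : 0 < z.re) (x : ℝ) :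
    ∫ t : ℝ, Complex.exp (-(Complex.I * x * t)) • gammaKernel n z t
      = n ! * ((z + Complex.I * x) ^ (n + 1))⁻¹ := by
  simp_rw [smul_eq_mul, cexp_neg_mul_gammaKernel]
  rw [integral_gammaKernel hn (by simpa using hz), div_eq_mul_inv]

lemma integral_cexp_mul_inv_add_I_mul_pow (hn : n ≠ 0) (hz : 0 < z.re) (s : ℝ) :
    ∫ x : ℝ, Complex.exp (Complex.I * s * x) * ((z + Complex.I * x) ^ (n + 1))⁻¹
      = 2 * π / n ! * gammaKernel n z s := by
  have transform := integral_cexp_neg_smul_gammaKernel hn hz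
  have inversion := integral_cexp_smul_integral_cexp_neg_smul (integrable_gammaKernel hn hz)
    (by simpa only [transform] using
      (integrable_inv_add_I_mul_pow (by lia) hz).const_mul (n ! : ℂ))
    (continuous_gammaKernel n z).continuousAt (s := s)
  simp_rw [transform, smul_eq_mul, mul_left_comm _ (n ! : ℂ)] at inversion
  rw [integral_const_mul, Complex.real_smul] at inversion
  have factorial_ne_zero : (n ! : ℂ) ≠ 0 := mod_cast n.factorial_ne_zero
  apply mul_left_cancel₀ factorial_ne_zero
  rw [inversion]
  push_cast
  field_simp

lemma integral_cexp_mul_inv_sub_I_mul_pow (hn : n ≠ 0) (hz : 0 < z.re) (s : ℝ) :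
    ∫ x : ℝ, Complex.exp (Complex.I * s * x) * ((z - Complex.I * x) ^ (n + 1))⁻¹
      = 2 * π / n ! * gammaKernel n z (-s) := by
  rw [← integral_cexp_mul_inv_add_I_mul_pow hn hz, ← integral_neg_eq_self]
  simp [sub_eq_add_neg]

lemma integrable_cexp_mul {f : ℝ → ℂ} (hf : Integrable f) (s : ℝ) :
    Integrable fun x : ℝ ↦ Complex.exp (Complex.I * s * x) * f x := by
  refine hf.bdd_mul (c := 1) (by fun_prop) (.of_forall fun x ↦ ?_)
  simp [Complex.norm_exp]

lemma integral_cexp_mul_linear_combination (hn : n ≠ 0) (hz : 0 < z.re) (a b : ℂ) (s : ℝ) :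
    ∫ x : ℝ, Complex.exp (Complex.I * s * x) *
        (a * ((z + Complex.I * x) ^ (n + 1))⁻¹ + b * ((z - Complex.I * x) ^ (n + 1))⁻¹)
      = 2 * π / n ! * (a * gammaKernel n z s + b * gammaKernel n z (-s)) := by
  have integrable_add := integrable_inv_add_I_mul_pow (n := n + 1) (by lia) hz
  have integrable_sub : Integrable fun x : ℝ ↦ ((z - Complex.I * x) ^ (n + 1))⁻¹ := by
    simpa [sub_eq_add_neg] using integrable_add.comp_neg
  simp_rw [mul_add, mul_left_comm _ a, mul_left_comm _ b]
  rw [integral_add ((integrable_cexp_mul integrable_add s).const_mul a)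
      ((integrable_cexp_mul integrable_sub s).const_mul b),
    integral_const_mul, integral_const_mul, integral_cexp_mul_inv_add_I_mul_pow hn hz,
    integral_cexp_mul_inv_sub_I_mul_pow hn hz]

end RationalFunctions

section CauchyScores

lemma one_add_ofReal_sq_eq_mul (x : ℝ) :
    (1 + (x : ℂ) ^ 2) = (1 + Complex.I * x) * (1 - Complex.I * x) := by
  linear_combination (x : ℂ) ^ 2 * Complex.I_sq

lemma mul_inv_one_add_I_mul_sq_add_mul_inv_one_sub_I_mul_sq (a b : ℂ) (x : ℝ) :
    a * ((1 + Complex.I * x) ^ 2)⁻¹ + b * ((1 - Complex.I * x) ^ 2)⁻¹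
      = (a * (1 - Complex.I * x) ^ 2 + b * (1 + Complex.I * x) ^ 2) / (1 + (x : ℂ) ^ 2) ^ 2 := by
  have h_add : 1 + Complex.I * x ≠ 0 := add_I_mul_ofReal_ne_zero (by simp) x
  have h_sub : 1 - Complex.I * x ≠ 0 := by
    simpa [sub_eq_add_neg] using add_I_mul_ofReal_ne_zero (z := 1) (by simp) (-x)
  rw [← div_eq_mul_inv, ← div_eq_mul_inv,
    div_add_div _ _ (pow_ne_zero 2 h_add) (pow_ne_zero 2 h_sub), ← mul_pow,
    ← one_add_ofReal_sq_eq_mul]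
  ring

lemma cauchy_location_score_mul_density_eq_partial_fractions (x : ℝ) :
    ((2 * x / (π * (1 + x ^ 2) ^ 2) : ℝ) : ℂ)
      = Complex.I / (2 * π) * ((1 + Complex.I * x) ^ 2)⁻¹
        + -(Complex.I / (2 * π)) * ((1 - Complex.I * x) ^ 2)⁻¹ := by
  have pi_ne_zero : (π : ℂ) ≠ 0 := mod_cast Real.pi_ne_zero
  rw [mul_inv_one_add_I_mul_sq_add_mul_inv_one_sub_I_mul_sq]
  push_cast
  rw [← div_div]
  congr 1
  field_simp
  linear_combination 4 * (x : ℂ) * Complex.I_sq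

lemma cauchy_scale_score_mul_density_eq_partial_fractions (x : ℝ) :
    (((x ^ 2 - 1) / (π * (1 + x ^ 2) ^ 2) : ℝ) : ℂ)
      = -(1 / (2 * π)) * ((1 + Complex.I * x) ^ 2)⁻¹
        + -(1 / (2 * π)) * ((1 - Complex.I * x) ^ 2)⁻¹ := by
  have pi_ne_zero : (π : ℂ) ≠ 0 := mod_cast Real.pi_ne_zero
  rw [mul_inv_one_add_I_mul_sq_add_mul_inv_one_sub_I_mul_sq]
  push_cast
  rw [← div_div]
  congr 1
  field_simp
  linear_combination 2 * (x : ℂ) ^ 2 * Complex.I_sq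

end CauchyScores

/-- Fourier-kernel transforms of the Cauchy location and scale scores:
`∫ e^{isx} h_μ(x) f(x) dx = i s e^{−|s|}` and `∫ e^{isx} h_σ(x) f(x) dx = −|s| e^{−|s|}`. -/
theorem stmt16 (s : ℝ) :
    (∫ x : ℝ, Complex.exp (Complex.I * s * x) * ((2 * x / (π * (1 + x ^ 2) ^ 2) : ℝ) : ℂ)
      = Complex.I * s * (Real.exp (-|s|) : ℂ)) ∧
    (∫ x : ℝ, Complex.exp (Complex.I * s * x) * (((x ^ 2 - 1) / (π * (1 + x ^ 2) ^ 2) : ℝ) : ℂ)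
      = -((|s| : ℝ) : ℂ) * (Real.exp (-|s|) : ℂ)) := by
  have pi_ne_zero : (π : ℂ) ≠ 0 := mod_cast Real.pi_ne_zero
  have transform (a b : ℂ) :=
    integral_cexp_mul_linear_combination (n := 1) (z := 1) one_ne_zero (by simp) a b s
  have kernel_difference := gammaKernel_one_sub_gammaKernel_one_neg 1 s
  have kernel_sum := gammaKernel_add_gammaKernel_neg one_ne_zero 1 s
  simp only [Nat.factorial_one, Nat.cast_one, div_one, one_mul, pow_one, Nat.reduceAdd]
    at transform kernel_difference kernel_sum
  rw [Complex.ofReal_exp, Complex.ofReal_neg]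
  constructor
  · simp_rw [cauchy_location_score_mul_density_eq_partial_fractions]
    rw [transform, mul_assoc Complex.I, ← kernel_difference]
    field_simp
    ring
  · simp_rw [cauchy_scale_score_mul_density_eq_partial_fractions]
    rw [transform, neg_mul ((|s| : ℝ) : ℂ), ← kernel_sum]
    field_simp
    ring
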